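/- arXiv:2403.06767 — 3 statements merged into one kernel-verified Lean document; each statement's English description precedes it below -/
import Mathlib

section
/- Let m ≥ 1, k = 2^m, let X be a compact Hausdorff space, and let A be a unital ℤ/k-C(X)-algebra. Then the function x ↦ wdim(A_x, ℤ/k) ∈ ℕ ∪ {∞} is upper semicontinuous on X; that is, for every n ∈ ℕ the set {x ∈ X : wdim(A_x, ℤ/k) ≤ n} is open in X. -/
/-- `ζ = exp(2πi/k)`. -/
noncomputable def ltZeta (k : ℕ) : ℂ := Complex.exp (2 * Real.pi * Complex.I / k)

/-- The "asterisk" set `✲_k = {t·ζ^m : t ∈ [0,1], 0 ≤ m < k} ⊆ ℂ`. -/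
noncomputable def ltAsterisk (k : ℕ) : Set ℂ :=
  {z | ∃ t ∈ Set.Icc (0 : ℝ) 1, ∃ m : ℕ, m < k ∧ z = (t : ℂ) * ltZeta k ^ m}

/-- The weak local-triviality dimension of the `ℤ/k`-action generated by `α`. -/
noncomputable def wdimLT {A : Type*} [Ring A] [StarRing A] [Algebra ℂ A]
    (k : ℕ) (α : A ≃⋆ₐ[ℂ] A) : ℕ∞ :=
  sInf ((fun n : ℕ => (n : ℕ∞)) '' {n : ℕ | ∃ a : Fin (n + 1) → A,
    (∀ i, IsStarNormal (a i)) ∧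
    (∀ i, α (a i) = ltZeta k • a i) ∧
    (∀ i, spectrum ℂ (a i) ⊆ ltAsterisk k) ∧
    IsUnit (∑ i, a i * star (a i))})

/-! A normal `ζ`-eigenvector with spectrum in the cone `{z | 0 ≤ z ^ k}` is, by functional
calculus, of the form `∑ j < k, ζ⁻ʲ βʲ(s ^ N)` with `s ≥ 0` whose orbit under the action is
pairwise orthogonal; here `N` is arbitrary, `s ^ N` being the image of the coordinate along the
positive ray. Conversely every such sum is an eigenvector of this kind, so lifting these
eigenvectors through an equivariant quotient map amounts to lifting orthogonal orbits. For orbits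
of order `2 ^ m` this is possible, up to replacing `s` by a power, by splitting off one factor `2`
at a time: the action exchanges the positive and the negative part of an anti-invariant
self-adjoint lift, and these are orthogonal.

Thus eigenvectors witnessing `wdim ≤ n` in the fiber at `x₀` lift to `A`. The lifts satisfy the
spectral condition in every fiber, and `∑ b b*` stays invertible in the fibers near `x₀`: an
element of `A` that vanishes at `x₀` has small norm in the nearby fibers, so an inverse modulo
`J_{x₀}` is an approximate inverse there. -/

section CyclicOrbits

open Finset Function

variable {R F : Type*} [FunLike F R R] {k N : ℕ}

/-- The sum `∑_{j < k} c⁻ʲ fʲ(x)`. For a linear map `f` with `f^[k] = id` and a `k`-th root of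
unity `c`, it is `k` times the spectral projection of `x` to the `c`-eigenspace of `f`. -/
def isotypicSum {𝕜 V : Type*} [Field 𝕜] [AddCommMonoid V] [Module 𝕜 V]
    (k : ℕ) (f : V → V) (c : 𝕜) (x : V) : V :=
  ∑ j ∈ range k, c⁻¹ ^ j • f^[j] x

theorem map_isotypicSum {𝕜 V G : Type*} [Field 𝕜] [AddCommGroup V] [Module 𝕜 V] [FunLike G V V]
    [LinearMapClass G 𝕜 V V] (f : G) {c : 𝕜} (hc : c ^ k = 1) {x : V} (hx : IsPeriodicPt f k x) :
    f (isotypicSum k f c x) = c • isotypicSum k f c x := by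
  rcases eq_or_ne k 0 with rfl | hk
  · simp [isotypicSum]
  have hc0 : c ≠ 0 := by rintro rfl; simp [hk] at hc
  have hshift : isotypicSum k f c x = ∑ j ∈ range k, c⁻¹ ^ (j + 1) • f^[j + 1] x := by
    have h := sum_range_succ' (fun j ↦ c⁻¹ ^ j • f^[j] x) k
    rw [sum_range_succ, inv_pow, hc, hx.eq] at h
    simpa [isotypicSum] using h
  conv_rhs => rw [hshift]
  rw [isotypicSum, smul_sum, map_sum]
  refine sum_congr rfl fun j _ ↦ ?_
  rw [map_smul, iterate_succ_apply', smul_smul, pow_succ', mul_inv_cancel_left₀ hc0]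

theorem map_sum_range_iterate [AddCommGroup R] [AddMonoidHomClass F R R] (f : F) {x : R}
    (hx : IsPeriodicPt f k x) : f (∑ i ∈ range k, f^[i] x) = ∑ i ∈ range k, f^[i] x := by
  have h := birkhoffSum_apply_sub_birkhoffSum f id k x
  rw [hx.eq, sub_self, sub_eq_zero] at h
  simpa only [birkhoffSum, map_sum, id, ← iterate_succ_apply, ← iterate_succ_apply'] using h

theorem mul_sum_range_iterate_mul [NonUnitalSemiring R] [NonUnitalRingHomClass F R R] (f : F)
    {e : R} (he : IsFixedPt f e) (s : R) :
    e * (∑ i ∈ range k, f^[i] s) * e = ∑ i ∈ range k, f^[i] (e * s * e) := by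
  simp only [mul_sum, sum_mul, iterate_map_mul, (he.iterate _).eq]

/-- The points `fʲ(s)` with `k ∤ j` of the orbit of `s` are orthogonal to `s`. When `f` is a ring
homomorphism with `f^[k] = id`, the points `s, f s, …, f^[k - 1] s` are then pairwise
orthogonal. -/
def OrbitOrthogonal [Mul R] [Zero R] (f : R → R) (k : ℕ) (s : R) : Prop :=
  ∀ j, ¬ k ∣ j → s * f^[j] s = 0

namespace OrbitOrthogonal

theorem iterate_mul_iterate [MulZeroClass R] [MulHomClass F R R] [ZeroHomClass F R R] {f : F}
    {s : R} (hs : OrbitOrthogonal f k s) (hf : (⇑f)^[k] = id) (hk : k ≠ 0) {a b : ℕ}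
    (hab : ¬ a ≡ b [MOD k]) : f^[a] s * f^[b] s = 0 := by
  obtain ⟨j, hj⟩ : ∃ j, b + k * a = a + j :=
    Nat.exists_eq_add_of_le (Nat.le_add_left_of_le (Nat.le_mul_of_pos_left a hk.bot_lt))
  have hkj : ¬ k ∣ j := fun h ↦ hab <| by
    simpa [Nat.ModEq, Nat.add_mod, Nat.mod_eq_zero_of_dvd h] using congrArg (· % k) hj.symm
  have hb : f^[b] s = f^[a] (f^[j] s) := by
    rw [← iterate_add_apply, ← hj, iterate_add_apply, iterate_mul, hf, iterate_id, id]
  rw [hb, ← iterate_map_mul, hs j hkj, iterate_map_zero]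

theorem pow_succ [MonoidWithZero R] [MonoidHomClass F R R] {f : F} {s : R}
    (hs : OrbitOrthogonal f k s) (n : ℕ) : OrbitOrthogonal f k (s ^ (n + 1)) := fun j hj ↦ by
  rw [iterate_map_pow, _root_.pow_succ, pow_succ', mul_assoc, ← mul_assoc s, hs j hj, zero_mul,
    mul_zero]

theorem iterate_two [Mul R] [Zero R] {f : R → R} {s : R} (hs : OrbitOrthogonal f (2 * N) s) :
    OrbitOrthogonal f^[2] N s := fun j hj ↦ by
  rw [← iterate_mul]
  exact hs _ (mt (Nat.dvd_of_mul_dvd_mul_left two_pos) hj)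

theorem of_iterate_two [Mul R] [Zero R] {f : R → R} {s : R} (hs : OrbitOrthogonal f^[2] N s)
    (hodd : ∀ i, s * f^[2 * i + 1] s = 0) : OrbitOrthogonal f (2 * N) s := fun j hj ↦ by
  obtain ⟨i, rfl | rfl⟩ := j.even_or_odd'
  · rw [iterate_mul]
    exact hs i fun h ↦ hj (Nat.mul_dvd_mul_left 2 h)
  · exact hodd i

theorem sum_iterate_mul_self [NonUnitalNonAssocSemiring R] [NonUnitalRingHomClass F R R] {f : F}
    {s : R} (hs : OrbitOrthogonal f k s) (hf : (⇑f)^[k] = id) (hk : k ≠ 0) :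
    (∑ i ∈ range k, f^[i] s) * s = s * s := by
  rw [sum_mul, sum_eq_single_of_mem 0 (mem_range.2 hk.bot_lt), iterate_zero, id]
  intro i hi hi0
  refine hs.iterate_mul_iterate (b := 0) hf hk fun h ↦ hi0 ?_
  exact h.eq_of_lt_of_lt (mem_range.1 hi) hk.bot_lt

theorem sum_iterate_two_mul_map [NonUnitalNonAssocSemiring R] [NonUnitalRingHomClass F R R]
    {f : F} {s : R} (hs : OrbitOrthogonal f (2 * N) s) (hf : (⇑f)^[2 * N] = id) (hN : N ≠ 0) :
    (∑ i ∈ range N, (f^[2])^[i] s) * f (∑ i ∈ range N, (f^[2])^[i] s) = 0 := by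
  rw [map_sum, sum_mul_sum]
  refine sum_eq_zero fun i _ ↦ sum_eq_zero fun j _ ↦ ?_
  rw [← iterate_mul, ← iterate_mul, ← iterate_succ_apply' f]
  refine hs.iterate_mul_iterate hf (by simpa) fun h ↦ ?_
  have hparity : 2 * i % 2 = (2 * j + 1) % 2 := h.of_mul_right N
  omega

end OrbitOrthogonal

end CyclicOrbits

section PositiveLifts

open Finset Function
open scoped CStarAlgebra ComplexStarModule

variable {A B : Type*} [CStarAlgebra A] [CStarAlgebra B]

theorem map_posPart_of_isSelfAdjoint {F : Type*} [FunLike F A B] [AlgHomClass F ℂ A B]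
    [StarHomClass F A B] (φ : F) {a : A} (ha : IsSelfAdjoint a) : φ a⁺ = (φ a)⁺ := by
  rw [CFC.posPart_def, CFC.posPart_def]
  exact NonUnitalStarAlgHomClass.map_cfcₙ (S := ℂ) φ _ a (by cfc_cont_tac) (by simp)
    (by fun_prop) ha (ha.map φ)

theorem isSelfAdjoint_posPart (a : A) : IsSelfAdjoint a⁺ := by
  rw [CFC.posPart_def]
  exact cfcₙ_predicate _ a

theorem posPart_mul_eq_zero {a y : A} (ha : IsSelfAdjoint a) (hay : a * y = 0) : a⁺ * y = 0 := by
  have hsa : IsSelfAdjoint a⁺ := isSelfAdjoint_posPart a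
  have hsq : a⁺ * a⁺ = a⁺ * a := by
    simpa only [mul_sub, CFC.posPart_mul_negPart, sub_zero] using
      congrArg (a⁺ * ·) (CFC.posPart_sub_negPart a ha)
  rw [← CStarRing.star_mul_self_eq_zero_iff, star_mul, hsa.star_eq, mul_assoc, ← mul_assoc a⁺ a⁺,
    hsq, mul_assoc, hay, mul_zero, mul_zero]

theorem exists_isSelfAdjoint_lift {π : A →⋆ₐ[ℂ] B} (hπ : Surjective π) {s : B}
    (hs : IsSelfAdjoint s) : ∃ x, IsSelfAdjoint x ∧ π x = s := by
  obtain ⟨a, rfl⟩ := hπ s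
  exact ⟨ℜ a, (ℜ a).2, by rw [map_realPart, hs.coe_realPart]⟩

theorem conjugate_eq_pow_three {R : Type*} [Monoid R] [StarMul R] {e s : R}
    (he : IsSelfAdjoint e) (hs : IsSelfAdjoint s) (hes : e * s = s * s) : e * s * e = s ^ 3 := by
  have hse : s * e = s * s := by simpa [he.star_eq, hs.star_eq] using congrArg star hes
  rw [hes, mul_assoc, hse, pow_succ, pow_two, mul_assoc]

theorem exists_antiinvariant_lift {N : ℕ} {π : A →⋆ₐ[ℂ] B} (hπ : Surjective π)
    {α : A ≃⋆ₐ[ℂ] A} {β : B ≃⋆ₐ[ℂ] B} (hπα : Semiconj π α β) (hα : (⇑α)^[2 * N] = id)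
    {e : A} (he : IsSelfAdjoint e) (hαe : IsFixedPt α e) {s : B} (hs : IsSelfAdjoint s)
    (hes : π e * s = s * s) :
    ∃ h : A, IsSelfAdjoint h ∧ α h = -h ∧ (∀ y, e * y = 0 → h * y = 0) ∧
      π h = ∑ i ∈ range N, (β^[2])^[i] (s ^ 3) - β (∑ i ∈ range N, (β^[2])^[i] (s ^ 3)) := by
  obtain ⟨x, hx, hπx⟩ := exists_isSelfAdjoint_lift hπ hs
  set u := ∑ i ∈ range N, (α^[2])^[i] x with hu_def
  have hu : IsSelfAdjoint u := isSelfAdjoint_sum _ fun i _ ↦ by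
    rw [← iterate_mul]
    exact Iterate.rec IsSelfAdjoint hx (fun _ h ↦ h.map α) _
  have hαu : α (α u) = u := map_sum_range_iterate (k := N) (α.trans α) <|
    congrFun ((iterate_mul α 2 N).symm.trans hα) x
  have hβe : IsFixedPt β (π e) := by rw [IsFixedPt, ← hπα, hαe]
  have hw : π e * π u * π e = ∑ i ∈ range N, (β^[2])^[i] (s ^ 3) := by
    have hπu : π u = ∑ i ∈ range N, (β^[2])^[i] s := by
      simp only [hu_def, map_sum, ((hπα.iterate_right 2).iterate_right _).eq, hπx]
    rw [hπu, ← conjugate_eq_pow_three (he.map π) hs hes]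
    exact mul_sum_range_iterate_mul (β.trans β) (hβe.iterate 2) s
  refine ⟨e * (u - α u) * e, ?_, ?_, fun y hy ↦ by rw [mul_assoc, hy, mul_zero], ?_⟩
  · simpa only [he.star_eq] using (hu.sub (hu.map α)).conjugate e
  · rw [map_mul, map_mul, map_sub, hαe, hαu]; noncomm_ring
  · rw [← hw, map_mul, map_mul, map_sub, map_mul, map_mul, hβe, hπα.eq]; noncomm_ring

variable [PartialOrder B] [StarOrderedRing B]

theorem exists_nonneg_lift [PartialOrder A] [StarOrderedRing A] {π : A →⋆ₐ[ℂ] B}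
    (hπ : Surjective π) {s : B} (hs : 0 ≤ s) : ∃ x, 0 ≤ x ∧ π x = s := by
  obtain ⟨x, hx, rfl⟩ := exists_isSelfAdjoint_lift hπ (.of_nonneg hs)
  exact ⟨x⁺, CFC.posPart_nonneg x,
    (map_posPart_of_isSelfAdjoint π hx).trans ((CFC.posPart_eq_self _).2 hs)⟩

theorem iterate_nonneg (β : B ≃⋆ₐ[ℂ] B) {s : B} (hs : 0 ≤ s) (j : ℕ) : 0 ≤ β^[j] s :=
  Iterate.rec (0 ≤ ·) hs (fun _ h ↦ map_nonneg β h) j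

-- The action swaps `h⁺` and `h⁻` when `α h = -h`, so `h⁺` is orthogonal to its image and fixed by
-- `α²`.
theorem exists_orthogonal_lift_sum_iterate_two {N : ℕ} (hN : N ≠ 0) {π : A →⋆ₐ[ℂ] B}
    (hπ : Surjective π) {α : A ≃⋆ₐ[ℂ] A} {β : B ≃⋆ₐ[ℂ] B} (hπα : Semiconj π α β)
    (hα : (⇑α)^[2 * N] = id) (hβ : (⇑β)^[2 * N] = id) {e : A} (he : IsSelfAdjoint e)
    (hαe : IsFixedPt α e) {s : B} (hs0 : 0 ≤ s) (hs : OrbitOrthogonal β (2 * N) s)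
    (hes : π e * s = s * s) :
    ∃ e' : A, IsSelfAdjoint e' ∧ IsFixedPt (α.trans α) e' ∧ e' * α e' = 0 ∧
      (∀ y, e * y = 0 → e' * y = 0) ∧ π e' = ∑ i ∈ range N, (β^[2])^[i] (s ^ 3) := by
  obtain ⟨h, hsa, hαh, hle, hπh⟩ :=
    exists_antiinvariant_lift hπ hπα hα he hαe (.of_nonneg hs0) hes
  have hw0 : 0 ≤ ∑ i ∈ range N, (β^[2])^[i] (s ^ 3) := sum_nonneg fun i _ ↦ by
    rw [← iterate_mul]
    exact iterate_nonneg β (CStarAlgebra.pow_nonneg hs0 3) _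
  have hπpos : π h⁺ = ∑ i ∈ range N, (β^[2])^[i] (s ^ 3) :=
    (map_posPart_of_isSelfAdjoint π hsa).trans <| And.left <| CFC.posPart_negPart_unique hπh
      ((hs.pow_succ 2).sum_iterate_two_mul_map hβ hN) hw0 (map_nonneg β hw0)
  have hαpos : α h⁺ = h⁻ := by
    rw [map_posPart_of_isSelfAdjoint α hsa, hαh, CFC.posPart_neg]
  have hαneg : α h⁻ = h⁺ := by
    rw [← CFC.posPart_neg, map_posPart_of_isSelfAdjoint α hsa.neg, map_neg, hαh, neg_neg]
  exact ⟨h⁺, isSelfAdjoint_posPart h, (congrArg α hαpos).trans hαneg,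
    by rw [hαpos, CFC.posPart_mul_negPart], fun y hy ↦ posPart_mul_eq_zero hsa (hle y hy), hπpos⟩

variable [PartialOrder A] [StarOrderedRing A]

-- `∀ y, e * y = 0 → p * y = 0` is the trace of `p` lying in the hereditary subalgebra generated
-- by `e` that survives the induction; it transfers `e' * α e' = 0` to `p * α p = 0`.
theorem exists_orbitOrthogonal_lift_of_mul_eq_mul_self {π : A →⋆ₐ[ℂ] B} (hπ : Surjective π)
    (m : ℕ) : ∀ {α : A ≃⋆ₐ[ℂ] A} {β : B ≃⋆ₐ[ℂ] B}, Semiconj π α β → (⇑α)^[2 ^ m] = id →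
      (⇑β)^[2 ^ m] = id → ∀ {e : A}, IsSelfAdjoint e → IsFixedPt α e → ∀ {s : B}, 0 ≤ s →
      OrbitOrthogonal β (2 ^ m) s → π e * s = s * s →
      ∃ p, 0 ≤ p ∧ OrbitOrthogonal α (2 ^ m) p ∧ π p = s ^ 3 ^ (m + 1) ∧
        ∀ y, e * y = 0 → p * y = 0 := by
  induction m with
  | zero =>
    intro α β _ _ _ e he _ s hs0 _ hes
    obtain ⟨x, hx0, hπx⟩ := exists_nonneg_lift hπ hs0
    refine ⟨e * x * e, he.conjugate_nonneg hx0, fun j hj ↦ absurd (one_dvd j) hj, ?_,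
      fun y hy ↦ by rw [mul_assoc, hy, mul_zero]⟩
    rw [map_mul, map_mul, hπx, conjugate_eq_pow_three (he.map π) (.of_nonneg hs0) hes, zero_add,
      pow_one]
  | succ m ih =>
    intro α β hπα hα hβ e he hαe s hs0 hs hes
    rw [pow_succ'] at hα hβ hs
    have hα' : (⇑(α.trans α))^[2 ^ m] = id := (iterate_mul α 2 _).symm.trans hα
    have hβ' : (⇑(β.trans β))^[2 ^ m] = id := (iterate_mul β 2 _).symm.trans hβ
    have hs' : OrbitOrthogonal (β.trans β) (2 ^ m) (s ^ 3) := (hs.pow_succ 2).iterate_two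
    obtain ⟨e', he', hαe', he'α, hle, hπe'⟩ :=
      exists_orthogonal_lift_sum_iterate_two (by positivity) hπ hπα hα hβ he hαe hs0 hs hes
    obtain ⟨p, hp0, hp, hπp, hlep⟩ := ih (hπα.iterate_right 2) hα' hβ' he' hαe'
      (CStarAlgebra.pow_nonneg hs0 3) hs' (hπe' ▸ hs'.sum_iterate_mul_self hβ' (by positivity))
    have hαe'p : α e' * p = 0 := by
      simpa [(he'.map α).star_eq, (IsSelfAdjoint.of_nonneg hp0).star_eq] using
        congrArg star (hlep _ he'α)
    have hfix (i : ℕ) : α^[2 * i + 1] (α e') = e' := by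
      rw [← iterate_succ_apply, Nat.succ_eq_add_one, add_assoc, ← mul_add_one, iterate_mul]
      exact (hαe'.iterate (i + 1)).eq
    refine ⟨p, hp0, pow_succ' 2 m ▸ .of_iterate_two hp fun i ↦ hlep _ ?_,
      by rw [hπp, ← pow_mul, ← pow_succ'], fun y hy ↦ hlep y (hle y hy)⟩
    rw [← hfix i, ← iterate_map_mul, hαe'p, iterate_map_zero]

theorem exists_orbitOrthogonal_lift {m : ℕ} {π : A →⋆ₐ[ℂ] B} (hπ : Surjective π)
    {α : A ≃⋆ₐ[ℂ] A} {β : B ≃⋆ₐ[ℂ] B} (hπα : Semiconj π α β) (hα : (⇑α)^[2 ^ m] = id)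
    (hβ : (⇑β)^[2 ^ m] = id) {s : B} (hs0 : 0 ≤ s) (hs : OrbitOrthogonal β (2 ^ m) s) :
    ∃ p, 0 ≤ p ∧ OrbitOrthogonal α (2 ^ m) p ∧ π p = s ^ 3 ^ (m + 1) := by
  obtain ⟨x, hx, hπx⟩ := exists_isSelfAdjoint_lift hπ (.of_nonneg hs0)
  have he : IsSelfAdjoint (∑ i ∈ range (2 ^ m), α^[i] x) := isSelfAdjoint_sum _ fun i _ ↦
    Iterate.rec IsSelfAdjoint hx (fun _ h ↦ h.map α) i
  have hes : π (∑ i ∈ range (2 ^ m), α^[i] x) * s = s * s := by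
    simpa only [map_sum, (hπα.iterate_right _).eq, hπx] using
      hs.sum_iterate_mul_self hβ (by positivity)
  obtain ⟨p, hp0, hp, hπp, -⟩ := exists_orbitOrthogonal_lift_of_mul_eq_mul_self hπ m hπα hα hβ he
    (map_sum_range_iterate α (congrFun hα x)) hs0 hs hes
  exact ⟨p, hp0, hp, hπp⟩

end PositiveLifts

section Cone

open Finset Function
open scoped ComplexOrder

variable {k : ℕ}

theorem isPrimitiveRoot_ltZeta (hk : k ≠ 0) : IsPrimitiveRoot (ltZeta k) k :=
  Complex.isPrimitiveRoot_exp k hk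

theorem norm_ltZeta (hk : k ≠ 0) : ‖ltZeta k‖ = 1 :=
  (isPrimitiveRoot_ltZeta hk).norm'_eq_one hk

theorem ofReal_mul_ltZeta_pow_pow (hk : k ≠ 0) (t : ℝ) (j : ℕ) :
    ((t : ℂ) * ltZeta k ^ j) ^ k = (t ^ k : ℝ) := by
  rw [mul_pow, ← pow_mul', pow_mul, (isPrimitiveRoot_ltZeta hk).pow_eq_one, one_pow, mul_one,
    Complex.ofReal_pow]

theorem norm_ofReal_mul_ltZeta_pow (hk : k ≠ 0) {t : ℝ} (ht : 0 ≤ t) (j : ℕ) :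
    ‖(t : ℂ) * ltZeta k ^ j‖ = t := by
  rw [norm_mul, norm_pow, norm_ltZeta hk, one_pow, mul_one, Complex.norm_of_nonneg ht]

theorem exists_eq_norm_mul_ltZeta_pow (hk : k ≠ 0) {z : ℂ} (hz : 0 ≤ z ^ k) :
    ∃ j < k, z = ‖z‖ * ltZeta k ^ j := by
  have : NeZero k := ⟨hk⟩
  rcases eq_or_ne z 0 with rfl | hz0
  · exact ⟨0, hk.bot_lt, by simp⟩
  have hnorm : (‖z‖ : ℂ) ≠ 0 := by simpa using hz0
  have hunit : (z / ‖z‖) ^ k = 1 := by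
    rw [div_pow, div_eq_one_iff_eq (pow_ne_zero _ hnorm), ← Complex.ofReal_pow, ← norm_pow]
    exact (RCLike.norm_of_nonneg' hz).symm
  obtain ⟨j, hj, hζ⟩ := (isPrimitiveRoot_ltZeta hk).eq_pow_of_pow_eq_one hunit
  exact ⟨j, hj, by rw [hζ, mul_div_cancel₀ _ hnorm]⟩

theorem mem_ltAsterisk_iff (hk : k ≠ 0) {z : ℂ} : z ∈ ltAsterisk k ↔ ‖z‖ ≤ 1 ∧ 0 ≤ z ^ k := by
  constructor
  · rintro ⟨t, ⟨ht0, ht1⟩, j, -, rfl⟩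
    rw [norm_ofReal_mul_ltZeta_pow hk ht0, ofReal_mul_ltZeta_pow_pow hk]
    exact ⟨ht1, Complex.zero_le_real.2 (pow_nonneg ht0 k)⟩
  · rintro ⟨hz1, hz⟩
    obtain ⟨j, hj, hzj⟩ := exists_eq_norm_mul_ltZeta_pow hk hz
    exact ⟨‖z‖, ⟨norm_nonneg z, hz1⟩, j, hj, hzj⟩

/-- A continuous function `ℂ → ℝ` which, on the cone `{z | 0 ≤ z ^ k}` over the `k`-th roots of
unity, is the coordinate along the positive ray: it is `t` at `t ≥ 0` and vanishes on the other
rays. The factor in front of the penalty `‖‖z‖ - z‖` is large enough to outweigh `‖z‖` on each of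
those. -/
noncomputable def rayCoord (k : ℕ) (z : ℂ) : ℝ :=
  max 0 (‖z‖ - (∑ j ∈ range k, ‖1 - ltZeta k ^ j‖⁻¹) * ‖(‖z‖ : ℂ) - z‖)

theorem continuous_rayCoord (k : ℕ) : Continuous (rayCoord k) := by
  unfold rayCoord
  fun_prop

theorem rayCoord_nonneg (k : ℕ) (z : ℂ) : 0 ≤ rayCoord k z :=
  le_max_left _ _

theorem rayCoord_ofReal (k : ℕ) {t : ℝ} (ht : 0 ≤ t) : rayCoord k t = t := by
  simp [rayCoord, abs_of_nonneg ht, ht]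

theorem rayCoord_mul_ltZeta_pow (hk : k ≠ 0) {t : ℝ} (ht : 0 ≤ t) {j : ℕ} (hj : ¬ k ∣ j) :
    rayCoord k (t * ltZeta k ^ j) = 0 := by
  have hζ := isPrimitiveRoot_ltZeta hk
  have hpos : 0 < ‖1 - ltZeta k ^ (j % k)‖ := by
    rw [norm_pos_iff, sub_ne_zero, ne_comm, Ne, hζ.pow_eq_one_iff_dvd]
    rwa [← Nat.dvd_mod_iff dvd_rfl] at hj
  have hle : ‖1 - ltZeta k ^ (j % k)‖⁻¹ ≤ ∑ i ∈ range k, ‖1 - ltZeta k ^ i‖⁻¹ :=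
    single_le_sum (f := fun i ↦ ‖1 - ltZeta k ^ i‖⁻¹) (fun i _ ↦ by positivity)
      (mem_range.2 (Nat.mod_lt j hk.bot_lt))
  have hpenalty : ‖(t : ℂ) - t * ltZeta k ^ j‖ = t * ‖1 - ltZeta k ^ (j % k)‖ := by
    rw [← mul_one_sub, norm_mul, Complex.norm_of_nonneg ht, ← pow_eq_pow_mod j hζ.pow_eq_one]
  rw [rayCoord, norm_ofReal_mul_ltZeta_pow hk ht, hpenalty, max_eq_left]
  rw [sub_nonpos, mul_left_comm]
  exact le_mul_of_one_le_right ht ((inv_le_iff_one_le_mul₀ hpos).1 hle)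

theorem rayCoord_mul_rayCoord_eq_zero (hk : k ≠ 0) {z : ℂ} (hz : 0 ≤ z ^ k) {j : ℕ}
    (hj : ¬ k ∣ j) : rayCoord k z * rayCoord k (ltZeta k ^ j * z) = 0 := by
  obtain ⟨i, -, hzi⟩ := exists_eq_norm_mul_ltZeta_pow hk hz
  by_cases hi : k ∣ i
  · have hzi' : z = ‖z‖ := by
      rwa [((isPrimitiveRoot_ltZeta hk).pow_eq_one_iff_dvd i).2 hi, mul_one] at hzi
    rw [hzi', mul_comm (ltZeta k ^ j), rayCoord_mul_ltZeta_pow hk (norm_nonneg z) hj, mul_zero]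
  · rw [hzi, rayCoord_mul_ltZeta_pow hk (norm_nonneg z) hi, zero_mul]

theorem sum_rayCoord (hk : k ≠ 0) {z : ℂ} (hz : 0 ≤ z ^ k) :
    ∑ j ∈ range k, (ltZeta k)⁻¹ ^ j * (rayCoord k (ltZeta k ^ j * z) : ℂ) = z := by
  have hζ := isPrimitiveRoot_ltZeta hk
  set T := LinearMap.funLeft ℂ ℂ (ltZeta k * ·)
  have hT (j : ℕ) (g : ℂ → ℂ) (w : ℂ) : T^[j] g w = g (ltZeta k ^ j * w) := by
    induction j generalizing w with
    | zero => simp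
    | succ j ih => rw [iterate_succ_apply', pow_succ, mul_assoc, ← ih]; rfl
  set S := isotypicSum k T (ltZeta k) fun w ↦ (rayCoord k w : ℂ)
  have hS (w : ℂ) :
      S w = ∑ j ∈ range k, (ltZeta k)⁻¹ ^ j * (rayCoord k (ltZeta k ^ j * w) : ℂ) := by
    simp only [S, isotypicSum, Finset.sum_apply, Pi.smul_apply, hT, smul_eq_mul]
  have hSζ : T S = ltZeta k • S := map_isotypicSum T hζ.pow_eq_one <| funext fun w ↦ by
    rw [hT, hζ.pow_eq_one, one_mul]
  have hSζ_pow (j : ℕ) (w : ℂ) : S (ltZeta k ^ j * w) = ltZeta k ^ j * S w := by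
    induction j with
    | zero => simp
    | succ j ih => rw [pow_succ', mul_assoc, mul_assoc, ← ih]; exact congrFun hSζ _
  have hSnorm : S (‖z‖ : ℂ) = ‖z‖ := by
    rw [hS, sum_eq_single_of_mem 0 (mem_range.2 hk.bot_lt)]
    · rw [pow_zero, pow_zero, one_mul, one_mul, rayCoord_ofReal k (norm_nonneg z)]
    · intro j hj hj0
      rw [mul_comm (ltZeta k ^ j), rayCoord_mul_ltZeta_pow hk (norm_nonneg z)
        (Nat.not_dvd_of_pos_of_lt (Nat.pos_of_ne_zero hj0) (mem_range.1 hj)), Complex.ofReal_zero,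
        mul_zero]
  obtain ⟨j, -, hzj⟩ := exists_eq_norm_mul_ltZeta_pow hk hz
  rw [← hS, hzj, mul_comm, hSζ_pow, hSnorm]

end Cone

section ConeEigenvectors

open Finset Function
open scoped ComplexOrder CStarAlgebra

theorem sum_mul_sum_of_orthogonal {ι R : Type*} [NonUnitalNonAssocSemiring R] {s : Finset ι}
    {f g : ι → R} (h : (s : Set ι).Pairwise fun i j ↦ f i * g j = 0) :
    (∑ i ∈ s, f i) * ∑ i ∈ s, g i = ∑ i ∈ s, f i * g i := by
  rw [sum_mul_sum]
  exact sum_congr rfl fun i hi ↦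
    sum_eq_single_of_mem i hi fun j hj hji ↦ h hi hj hji.symm

theorem sum_pow_succ_of_orthogonal {ι R : Type*} [Semiring R] {s : Finset ι} {f : ι → R}
    (h : (s : Set ι).Pairwise fun i j ↦ f i * f j = 0) (n : ℕ) :
    (∑ i ∈ s, f i) ^ (n + 1) = ∑ i ∈ s, f i ^ (n + 1) := by
  induction n with
  | zero => simp
  | succ n ih =>
    simp only [pow_succ _ (n + 1), ih]
    refine sum_mul_sum_of_orthogonal fun i hi j hj hij ↦ ?_
    simp only [pow_succ (f i) n, mul_assoc, h hi hj hij, mul_zero]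

variable {A B : Type*} [CStarAlgebra A] [CStarAlgebra B] {k : ℕ}

/-- A normal `ζ`-eigenvector of `α`, where `ζ = ltZeta k`, whose spectrum lies in the cone
`{z | 0 ≤ z ^ k}` over the `k`-th roots of unity. Up to scaling, these are the elements that enter
the definition of `wdimLT k α`. -/
structure IsConeEigenvector (k : ℕ) (α : A ≃⋆ₐ[ℂ] A) (a : A) : Prop where
  isStarNormal : IsStarNormal a
  map_eq : α a = ltZeta k • a
  pow_nonneg : ∀ z ∈ spectrum ℂ a, 0 ≤ z ^ k

theorem isConeEigenvector_isotypicSum [PartialOrder A] [StarOrderedRing A] (hk : k ≠ 0)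
    {α : A ≃⋆ₐ[ℂ] A} (hα : (⇑α)^[k] = id) {p : A} (hp0 : 0 ≤ p) (hp : OrbitOrthogonal α k p) :
    IsConeEigenvector k α (isotypicSum k α (ltZeta k) p) := by
  have hζ := isPrimitiveRoot_ltZeta hk
  have hsa (j : ℕ) : IsSelfAdjoint (α^[j] p) := .of_nonneg (iterate_nonneg α hp0 j)
  have horth (c d : ℕ → ℂ) :
      (range k : Set ℕ).Pairwise fun i j ↦ c i • α^[i] p * d j • α^[j] p = 0 := by
    intro i hi j hj hij
    rw [smul_mul_smul_comm, hp.iterate_mul_iterate hα hk fun h ↦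
      hij (h.eq_of_lt_of_lt (mem_range.1 hi) (mem_range.1 hj)), smul_zero]
  refine ⟨⟨?_⟩, map_isotypicSum α hζ.pow_eq_one (congrFun hα p), fun z hz ↦ ?_⟩
  · simp only [isotypicSum, star_sum, star_smul, (hsa _).star_eq]
    rw [Commute, SemiconjBy, sum_mul_sum_of_orthogonal (horth _ _),
      sum_mul_sum_of_orthogonal (horth _ _)]
    simp only [smul_mul_smul_comm, mul_comm]
  · have hpow : 0 ≤ isotypicSum k α (ltZeta k) p ^ k := by
      obtain ⟨n, rfl⟩ := Nat.exists_eq_succ_of_ne_zero hk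
      rw [isotypicSum, sum_pow_succ_of_orthogonal (horth _ _)]
      refine sum_nonneg fun i _ ↦ ?_
      rw [smul_pow, ← pow_mul', pow_mul, inv_pow, hζ.pow_eq_one, inv_one, one_pow, one_smul]
      exact CStarAlgebra.pow_nonneg (iterate_nonneg α hp0 i) _
    exact spectrum_nonneg_of_nonneg hpow (spectrum.pow_mem_pow _ k hz)

theorem iterate_map_cfc_of_map_eq_smul {β : B ≃⋆ₐ[ℂ] B} {c : ℂ} {a : B} [IsStarNormal a]
    (ha : β a = c • a) {f : ℂ → ℂ} (hf : Continuous f) (j : ℕ) :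
    β^[j] (cfc f a) = cfc (fun z ↦ f (c ^ j * z)) a := by
  induction j generalizing f with
  | zero => simp
  | succ j ih =>
    have hmap : β (cfc f a) = cfc (fun z ↦ f (c * z)) a := by
      rw [cfc_comp_const_mul c f a hf.continuousOn, ← ha]
      exact StarAlgHomClass.map_cfc β f a hf.continuousOn (by fun_prop)
        (hφa := ha ▸ inferInstance)
    rw [iterate_succ_apply, hmap, ih (by fun_prop)]
    simp only [pow_succ', mul_assoc]

namespace IsConeEigenvector

theorem exists_isotypicSum_pow [PartialOrder B] [StarOrderedRing B] (hk : k ≠ 0)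
    {β : B ≃⋆ₐ[ℂ] B} {a : B} (ha : IsConeEigenvector k β a) {N : ℕ} (hN : N ≠ 0) :
    ∃ s, 0 ≤ s ∧ OrbitOrthogonal β k s ∧ isotypicSum k β (ltZeta k) (s ^ N) = a := by
  have := ha.isStarNormal
  set g : ℂ → ℂ := fun z ↦ (rayCoord k z ^ (N⁻¹ : ℝ) : ℝ)
  have hg : Continuous g := Complex.continuous_ofReal.comp <|
    (continuous_rayCoord k).rpow_const fun _ ↦ .inr (by positivity)
  have hgN (z : ℂ) : g z ^ N = rayCoord k z := by
    rw [← Complex.ofReal_pow, Real.rpow_inv_natCast_pow (rayCoord_nonneg k z) hN]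
  refine ⟨cfc g a, cfc_nonneg fun z _ ↦ ?_, fun j hj ↦ ?_, ?_⟩
  · exact Complex.zero_le_real.2 (Real.rpow_nonneg (rayCoord_nonneg k z) _)
  · rw [iterate_map_cfc_of_map_eq_smul ha.map_eq hg, ← cfc_mul g _ a, ← cfc_zero ℂ a]
    refine cfc_congr fun z hz ↦ ?_
    simp only [g, Pi.zero_apply]
    rw [← Complex.ofReal_mul, ← Real.mul_rpow (rayCoord_nonneg k _) (rayCoord_nonneg k _),
      rayCoord_mul_rayCoord_eq_zero hk (ha.pow_nonneg z hz) hj, Real.zero_rpow (by positivity),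
      Complex.ofReal_zero]
  · have hray (c : ℂ) : Continuous fun z ↦ (rayCoord k (c * z) : ℂ) :=
      Complex.continuous_ofReal.comp ((continuous_rayCoord k).comp (continuous_const_mul c))
    calc isotypicSum k β (ltZeta k) (cfc g a ^ N)
      _ = ∑ j ∈ range k, (ltZeta k)⁻¹ ^ j • β^[j] (cfc (fun z ↦ (rayCoord k z : ℂ)) a) := by
        rw [← cfc_pow g N a, isotypicSum]
        simp only [hgN]
      _ = ∑ j ∈ range k, cfc (fun z ↦ (ltZeta k)⁻¹ ^ j * (rayCoord k (ltZeta k ^ j * z) : ℂ)) a :=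
        sum_congr rfl fun j _ ↦ by
          rw [iterate_map_cfc_of_map_eq_smul ha.map_eq (by simpa using hray 1),
            cfc_const_mul _ _ a (hray _).continuousOn]
      _ = cfc id a := by
        rw [← cfc_sum _ a _ fun j _ ↦ ((hray _).const_mul _).continuousOn]
        exact cfc_congr fun z hz ↦ by
          simpa only [Finset.sum_apply, id] using sum_rayCoord hk (ha.pow_nonneg z hz)
      _ = a := cfc_id ℂ a

theorem map {α : A ≃⋆ₐ[ℂ] A} {β : B ≃⋆ₐ[ℂ] B} {π : A →⋆ₐ[ℂ] B} (hπα : Semiconj π α β) {a : A}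
    (ha : IsConeEigenvector k α a) : IsConeEigenvector k β (π a) where
  isStarNormal := ha.isStarNormal.map π
  map_eq := by rw [← hπα, ha.map_eq, map_smul]
  pow_nonneg z hz := ha.pow_nonneg z (AlgHom.spectrum_apply_subset π a hz)

theorem exists_lift {m : ℕ} {α : A ≃⋆ₐ[ℂ] A} {β : B ≃⋆ₐ[ℂ] B} {π : A →⋆ₐ[ℂ] B}
    (hπ : Surjective π) (hπα : Semiconj π α β) (hα : (⇑α)^[2 ^ m] = id) {a : B}
    (ha : IsConeEigenvector (2 ^ m) β a) : ∃ b, IsConeEigenvector (2 ^ m) α b ∧ π b = a := by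
  let _ := CStarAlgebra.spectralOrder A
  let _ := CStarAlgebra.spectralOrder B
  have := CStarAlgebra.spectralOrderedRing A
  have := CStarAlgebra.spectralOrderedRing B
  have hk : 2 ^ m ≠ 0 := by positivity
  have hβ : (⇑β)^[2 ^ m] = id := hπ.injective_comp_right <| by
    simpa [hα] using (hπα.iterate_right (2 ^ m)).comp_eq.symm
  obtain ⟨s, hs0, hs, rfl⟩ := ha.exists_isotypicSum_pow hk (N := 3 ^ (m + 1)) (by positivity)
  obtain ⟨p, hp0, hp, hπp⟩ := exists_orbitOrthogonal_lift hπ hπα hα hβ hs0 hs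
  refine ⟨_, isConeEigenvector_isotypicSum hk hα hp0 hp, ?_⟩
  simp only [isotypicSum, map_sum, map_smul, (hπα.iterate_right _).eq, hπp]

end IsConeEigenvector

theorem exists_smul_spectrum_subset_ltAsterisk {ι : Type*} [Finite ι] (hk : k ≠ 0) {a : ι → A}
    (ha : ∀ i, ∀ z ∈ spectrum ℂ (a i), 0 ≤ z ^ k) :
    ∃ r : ℂˣ, ∀ i, spectrum ℂ (r • a i) ⊆ ltAsterisk k := by
  have hbdd : Bornology.IsBounded (⋃ i, spectrum ℂ (a i)) :=
    Bornology.isBounded_iUnion.2 fun i ↦ spectrum.isBounded (a i)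
  obtain ⟨R, hR, hle⟩ := hbdd.exists_pos_norm_le
  refine ⟨(Units.mk0 (R : ℂ) (Complex.ofReal_ne_zero.2 hR.ne'))⁻¹, fun i ↦ ?_⟩
  rw [spectrum.unit_smul_eq_smul]
  rintro _ ⟨z, hz, rfl⟩
  have hzR : ‖z‖ ≤ R := hle z (Set.mem_iUnion_of_mem i hz)
  have hr : (0 : ℂ) ≤ (R : ℂ)⁻¹ := by
    rw [← Complex.ofReal_inv, Complex.zero_le_real]
    positivity
  simp only [Units.val_inv_eq_inv_val, Units.val_mk0, smul_eq_mul]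
  refine (mem_ltAsterisk_iff hk).2 ⟨?_, ?_⟩
  · rw [norm_mul, norm_inv, Complex.norm_of_nonneg hR.le]
    exact inv_mul_le_one_of_le₀ hzR hR.le
  · rw [mul_pow]
    exact mul_nonneg (pow_nonneg hr k) (ha i z hz)

theorem wdimLT_le_iff (hk : k ≠ 0) {α : A ≃⋆ₐ[ℂ] A} {n : ℕ} :
    wdimLT k α ≤ n ↔ ∃ n' ≤ n, ∃ a : Fin (n' + 1) → A,
      (∀ i, IsConeEigenvector k α (a i)) ∧ IsUnit (∑ i, a i * star (a i)) := by
  rw [← ENat.lt_add_one_iff (ENat.natCast_ne_top n), wdimLT, sInf_lt_iff]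
  simp only [Set.exists_mem_image, Set.mem_ofPred_eq, ENat.lt_add_one_iff (ENat.natCast_ne_top n),
    Nat.cast_le]
  constructor
  · rintro ⟨n', ⟨a, hnormal, hmap, hspec, hunit⟩, hn'⟩
    exact ⟨n', hn', a, fun i ↦ ⟨hnormal i, hmap i,
      fun z hz ↦ ((mem_ltAsterisk_iff hk).1 (hspec i hz)).2⟩, hunit⟩
  · rintro ⟨n', hn', a, ha, hunit⟩
    obtain ⟨r, hr⟩ := exists_smul_spectrum_subset_ltAsterisk hk fun i ↦ (ha i).pow_nonneg
    refine ⟨n', ⟨fun i ↦ r • a i, fun i ↦ ?_, fun i ↦ ?_, hr, ?_⟩, hn'⟩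
    · have := (ha i).isStarNormal
      exact inferInstanceAs <| IsStarNormal ((r : ℂ) • a i)
    · change α ((r : ℂ) • a i) = ltZeta k • (r : ℂ) • a i
      rw [map_smul, (ha i).map_eq, smul_comm]
    · simp only [star_smul, smul_mul_smul_comm, ← smul_sum]
      exact hunit.smul _

end ConeEigenvectors

section Fields

open Filter Function Topology

variable {X A : Type*} [CStarAlgebra A] {B : X → Type*} [∀ x, CStarAlgebra (B x)]

/-- The elements of `A` whose image in the fiber `B x` tends to `0` in norm as `x` runs along
`l`. -/
def vanishingAlong (π : ∀ x, A →⋆ₐ[ℂ] B x) (l : Filter X) : Ideal A where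
  carrier := {a | Tendsto (fun x ↦ ‖π x a‖) l (𝓝 0)}
  zero_mem' := by simpa using tendsto_const_nhds
  add_mem' {a b} ha hb := by
    refine squeeze_zero (fun _ ↦ norm_nonneg _) (fun x ↦ ?_) (by simpa using ha.add hb)
    rw [map_add]
    exact norm_add_le _ _
  smul_mem' c a ha := by
    refine squeeze_zero (fun _ ↦ norm_nonneg _) (fun x ↦ ?_) (by simpa using ha.const_mul ‖c‖)
    rw [smul_eq_mul, map_mul]
    exact (norm_mul_le _ _).trans
      (mul_le_mul_of_nonneg_right (NonUnitalStarAlgHom.norm_apply_le (π x) c) (norm_nonneg _))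

theorem mem_vanishingAlong {π : ∀ x, A →⋆ₐ[ℂ] B x} {l : Filter X} {a : A} :
    a ∈ vanishingAlong π l ↔ Tendsto (fun x ↦ ‖π x a‖) l (𝓝 0) :=
  Iff.rfl

theorem isClosed_vanishingAlong (π : ∀ x, A →⋆ₐ[ℂ] B x) (l : Filter X) :
    IsClosed (vanishingAlong π l : Set A) := by
  refine isClosed_of_closure_subset fun a ha ↦ ?_
  refine mem_vanishingAlong.2 (Metric.tendsto_nhds.2 fun ε hε ↦ ?_)
  obtain ⟨c, hc, hac⟩ := Metric.mem_closure_iff.1 ha (ε / 2) (by positivity)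
  filter_upwards [Tendsto.eventually_lt_const (half_pos hε) (mem_vanishingAlong.1 hc)] with x hx
  have hdist : ‖π x a - π x c‖ < ε / 2 := by
    rw [← map_sub]
    exact (NonUnitalStarAlgHom.norm_apply_le (π x) _).trans_lt (dist_eq_norm a c ▸ hac)
  rw [dist_zero_right, norm_norm]
  linarith [norm_le_norm_add_norm_sub' (π x a) (π x c)]

theorem map_eq_algebraMap_apply [TopologicalSpace X] {D : Type*} [Ring D] [Algebra ℂ D]
    {ψ : C(X, ℂ) →ₐ[ℂ] D} {x : X} (hψ : ∀ f : C(X, ℂ), f x = 0 → ψ f = 0) (f : C(X, ℂ)) :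
    ψ f = algebraMap ℂ D (f x) := by
  have h := hψ (f - algebraMap ℂ C(X, ℂ) (f x)) (by simp)
  rwa [map_sub, sub_eq_zero, AlgHom.commutes] at h

theorem ker_le_vanishingAlong_nhds [TopologicalSpace X] {ι : C(X, ℂ) →⋆ₐ[ℂ] A}
    {π : ∀ x, A →⋆ₐ[ℂ] B x}
    (hπ : ∀ x, RingHom.ker (π x) =
      (Ideal.span {a : A | ∃ f : C(X, ℂ), f x = 0 ∧ ι f = a}).topologicalClosure) (x₀ : X) :
    RingHom.ker (π x₀) ≤ vanishingAlong π (𝓝 x₀) := by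
  have hι (x : X) (f : C(X, ℂ)) : π x (ι f) = algebraMap ℂ (B x) (f x) := by
    refine map_eq_algebraMap_apply (ψ := ((π x).comp ι).toAlgHom) (fun g hg ↦ ?_) f
    have hmem : ι g ∈ RingHom.ker (π x) :=
      hπ x ▸ Submodule.le_topologicalClosure _ (Ideal.subset_span ⟨g, hg, rfl⟩)
    exact hmem
  rw [hπ]
  refine Submodule.topologicalClosure_minimal _ (Ideal.span_le.2 ?_)
    (isClosed_vanishingAlong π (𝓝 x₀))
  rintro _ ⟨f, hf, rfl⟩
  have hlim : Tendsto (fun x ↦ ‖f x‖ * ‖(1 : A)‖) (𝓝 x₀) (𝓝 0) := by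
    simpa [hf] using (f.continuous.norm.mul_const ‖(1 : A)‖).tendsto x₀
  refine mem_vanishingAlong.2 (squeeze_zero (fun _ ↦ norm_nonneg _) (fun x ↦ ?_) hlim)
  rw [hι, norm_algebraMap]
  have hone : ‖(1 : B x)‖ ≤ ‖(1 : A)‖ := map_one (π x) ▸ NonUnitalStarAlgHom.norm_apply_le (π x) 1
  exact mul_le_mul_of_nonneg_left hone (norm_nonneg _)

theorem eventually_isUnit {π : ∀ x, A →⋆ₐ[ℂ] B x} {l : Filter X} {x₀ : X}
    (hsurj : Surjective (π x₀)) (hker : RingHom.ker (π x₀) ≤ vanishingAlong π l) {c : A}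
    (hc : IsUnit (π x₀ c)) : ∀ᶠ x in l, IsUnit (π x c) := by
  obtain ⟨d, hcd, hdc⟩ := isUnit_iff_exists.1 hc
  obtain ⟨y, rfl⟩ := hsurj d
  have hnear {b : A} (hb : π x₀ b = 1) : ∀ᶠ x in l, IsUnit (π x b) := by
    have hmem : 1 - b ∈ vanishingAlong π l := hker <| by
      rw [RingHom.mem_ker, map_sub, map_one, hb, sub_self]
    filter_upwards [Tendsto.eventually_lt_const one_pos (mem_vanishingAlong.1 hmem)] with x hx
    simpa using isUnit_one_sub_of_norm_lt_one hx
  filter_upwards [hnear ((map_mul _ c y).trans hcd), hnear ((map_mul _ y c).trans hdc)] with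
    x hright hleft
  rw [map_mul] at hright hleft
  obtain ⟨u, hu⟩ := hright.exists_right_inv
  obtain ⟨v, hv⟩ := hleft.exists_left_inv
  exact isUnit_iff_exists_and_exists.2
    ⟨⟨_, (mul_assoc _ _ _).symm.trans hu⟩, ⟨_, (mul_assoc _ _ _).trans hv⟩⟩

theorem isOpen_setOf_wdimLT_le [TopologicalSpace X] {m : ℕ} {α : A ≃⋆ₐ[ℂ] A}
    (hα : (⇑α)^[2 ^ m] = id) {β : ∀ x, B x ≃⋆ₐ[ℂ] B x} {π : ∀ x, A →⋆ₐ[ℂ] B x}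
    (hsurj : ∀ x, Surjective (π x)) (hπα : ∀ x, Semiconj (π x) α (β x))
    (hker : ∀ x, RingHom.ker (π x) ≤ vanishingAlong π (𝓝 x)) (n : ℕ) :
    IsOpen {x | wdimLT (2 ^ m) (β x) ≤ n} := by
  have hk : 2 ^ m ≠ 0 := by positivity
  rw [isOpen_iff_mem_nhds]
  intro x₀ hx₀
  obtain ⟨n', hn', a, ha, hunit⟩ := (wdimLT_le_iff hk).1 hx₀
  choose b hb hπb using fun i ↦ (ha i).exists_lift (hsurj x₀) (hπα x₀) hα
  have hunit' : IsUnit (π x₀ (∑ i, b i * star (b i))) := by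
    simpa only [map_sum, map_mul, map_star, hπb] using hunit
  filter_upwards [eventually_isUnit (hsurj x₀) (hker x₀) hunit'] with x hx
  exact (wdimLT_le_iff hk).2 ⟨n', hn', fun i ↦ π x (b i), fun i ↦ (hb i).map (hπα x),
    by simpa only [map_sum, map_mul, map_star] using hx⟩

end Fields

theorem stmt1_general {X : Type*} [TopologicalSpace X]
    {A : Type*} [NormedRing A] [StarRing A] [CStarRing A] [NormedAlgebra ℂ A]
    [CompleteSpace A] [StarModule ℂ A] (m : ℕ) (ι : C(X, ℂ) →⋆ₐ[ℂ] A)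
    (α : A ≃⋆ₐ[ℂ] A) (hα : (⇑α)^[2 ^ m] = id)
    (B : X → Type*) [∀ x, NormedRing (B x)] [∀ x, StarRing (B x)] [∀ x, CStarRing (B x)]
    [∀ x, NormedAlgebra ℂ (B x)] [∀ x, CompleteSpace (B x)] [∀ x, StarModule ℂ (B x)]
    (β : ∀ x, B x ≃⋆ₐ[ℂ] B x) (π : ∀ x, A →⋆ₐ[ℂ] B x) (hsurj : ∀ x, Function.Surjective (π x))
    (hker : ∀ x, RingHom.ker (π x) =
      (Ideal.span {a : A | ∃ f : C(X, ℂ), f x = 0 ∧ ι f = a}).topologicalClosure)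
    (hequiv : ∀ x (a : A), π x (α a) = β x (π x a)) :
    ∀ n : ℕ, IsOpen {x : X | wdimLT (2 ^ m) (β x) ≤ (n : ℕ∞)} := by
  let _ : CStarAlgebra A := { }
  let _ : ∀ x, CStarAlgebra (B x) := fun x ↦ { }
  exact isOpen_setOf_wdimLT_le hα hsurj hequiv (ker_le_vanishingAlong_nhds hker)

/-- Let `k = 2^m` (`m ≥ 1`), `X` a compact Hausdorff space and `A` a
unital `ℤ/k`-`C(X)`-algebra, with fibers `B x = A / J_x` (presented as unital
C*-algebras with surjective equivariant morphisms `π x : A → B x` whose kernels are the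
closed ideals `J_x`).  Then `x ↦ wdim(A_x, ℤ/k)` is upper semicontinuous: each sublevel
set `{x : wdim(A_x, ℤ/k) ≤ n}` is open. -/
theorem stmt1
    {X : Type*} [TopologicalSpace X] [CompactSpace X] [T2Space X]
    {A : Type*} [NormedRing A] [StarRing A] [CStarRing A] [NormedAlgebra ℂ A]
    [CompleteSpace A] [StarModule ℂ A]
    (m : ℕ) (hm : 1 ≤ m) (k : ℕ) (hk : k = 2 ^ m)
    (ι : C(X, ℂ) →⋆ₐ[ℂ] A) (hcentral : ∀ f, ι f ∈ Set.center A)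
    (α : A ≃⋆ₐ[ℂ] A) (hαk : (⇑α)^[k] = id) (hαι : ∀ f, α (ι f) = ι f)
    (B : X → Type*) [∀ x, NormedRing (B x)] [∀ x, StarRing (B x)]
    [∀ x, CStarRing (B x)] [∀ x, NormedAlgebra ℂ (B x)] [∀ x, CompleteSpace (B x)]
    [∀ x, StarModule ℂ (B x)]
    (β : ∀ x, B x ≃⋆ₐ[ℂ] B x) (hβk : ∀ x, (⇑(β x))^[k] = id)
    (π : ∀ x, A →⋆ₐ[ℂ] B x)
    (hπsurj : ∀ x, Function.Surjective (π x))
    (hπker : ∀ x, RingHom.ker (π x) =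
      (Ideal.span {a : A | ∃ f : C(X, ℂ), f x = 0 ∧ ι f = a}).topologicalClosure)
    (hπequiv : ∀ x (a : A), π x (α a) = β x (π x a)) :
    ∀ n : ℕ, IsOpen {x : X | wdimLT k (β x) ≤ (n : ℕ∞)} := by
  subst hk
  exact stmt1_general m ι α hαk B β π hπsurj hπker hπequiv
end

section
/- There exist continuous maps a₀, a₁ : S² → M₂(ℂ) such that each a_i(x) is self-adjoint, each a_i is odd (u_x a_i(x) u_x = −a_i(x) for all x ∈ S²), and a₀(x)² + a₁(x)² = 1 for every x ∈ S². (Hence the ℤ/2-action on C(S², M₂(ℂ)) by pointwise conjugation by u_x has plain — and therefore weak — local-triviality dimension at most 1.) -/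
/-- The unit sphere `S² ⊆ ℝ³`. -/
def sphere2 : Set (Fin 3 → ℝ) := {x | x 0 ^ 2 + x 1 ^ 2 + x 2 ^ 2 = 1}

/-- For `x = (x₁, x₂, x₃) ∈ S²`, the self-adjoint unitary
`u_x = [[x₃, x₁ - i·x₂], [x₁ + i·x₂, -x₃]] ∈ M₂(ℂ)`. -/
noncomputable def uMat (x : Fin 3 → ℝ) : Matrix (Fin 2) (Fin 2) ℂ :=
  !![(x 2 : ℂ), (x 0 : ℂ) - Complex.I * (x 1 : ℂ);
     (x 0 : ℂ) + Complex.I * (x 1 : ℂ), -(x 2 : ℂ)]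

/-!
The map `v ↦ uMat v` on all of `ℝ³` is a Clifford map for the Euclidean quadratic form, so, for
`x ∈ S²`, `uMat v` is odd at `x` exactly when `v` is orthogonal to `x`, and `uMat v ^ 2` is the
scalar `|v|²`. The claim thus follows from two tangent vector fields `v`, `w` on `S²` with
`|v|² + |w|² = 1`. The rotation fields `x ↦ x × p` and `x ↦ x × q` about two independent axes have
no common zero, so dividing both by the square root of the sum of their squared lengths gives such
a pair.
-/

theorem mem_sphere2_iff_dotProduct_self {x : Fin 3 → ℝ} : x ∈ sphere2 ↔ x ⬝ᵥ x = 1 := by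
  simp only [Matrix.vec3_dotProduct, ← sq]
  rfl

theorem isSelfAdjoint_uMat (v : Fin 3 → ℝ) : IsSelfAdjoint (uMat v) := by
  rw [isSelfAdjoint_iff, Matrix.star_eq_conjTranspose]
  ext i j
  fin_cases i <;> fin_cases j <;> simp [uMat, sub_eq_add_neg]

theorem continuous_uMat : Continuous uMat := by
  unfold uMat
  fun_prop

theorem uMat_mul_uMat_add_swap (v w : Fin 3 → ℝ) :
    uMat v * uMat w + uMat w * uMat v = (2 * (v ⬝ᵥ w)) • 1 := by
  simp only [uMat, Matrix.mul_fin_two, Matrix.one_fin_two, Matrix.vec3_dotProduct]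
  ext i j
  fin_cases i <;> fin_cases j <;> simp <;> grind [Complex.I_sq]

theorem uMat_mul_self (v : Fin 3 → ℝ) : uMat v * uMat v = (v ⬝ᵥ v) • 1 := by
  have h := uMat_mul_uMat_add_swap v v
  rw [← two_smul ℝ, mul_smul] at h
  exact smul_right_injective _ (two_ne_zero' ℝ) h

theorem uMat_mul_uMat_mul_uMat (x v : Fin 3 → ℝ) :
    uMat x * uMat v * uMat x = (2 * (x ⬝ᵥ v)) • uMat x - (x ⬝ᵥ x) • uMat v := by
  rw [eq_sub_of_add_eq (uMat_mul_uMat_add_swap x v), sub_mul, mul_assoc, uMat_mul_self,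
    smul_one_mul, mul_smul_one]

section CrossProduct

open scoped Matrix

theorem cross_ne_zero_or_cross_ne_zero {K : Type*} [Field K] {x p q : Fin 3 → K} (hx : x ≠ 0)
    (hpq : LinearIndependent K ![p, q]) : x ⨯₃ p ≠ 0 ∨ x ⨯₃ q ≠ 0 := by
  by_contra! ⟨hp, hq⟩
  have parallel {y : Fin 3 → K} (hy : x ⨯₃ y = 0) : ∃ a : K, a • x = y := by
    by_contra! h
    exact crossProduct_ne_zero_iff_linearIndependent.2 ((LinearIndependent.pair_iff' hx).2 h) hy
  obtain ⟨a, rfl⟩ := parallel hp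
  obtain ⟨b, rfl⟩ := parallel hq
  have hab := LinearIndependent.pair_iff.1 hpq b (-a) (by module)
  exact hpq.ne_zero 0 (by simp [neg_eq_zero.1 hab.2])

variable {X : Type*} [TopologicalSpace X]

theorem exists_continuous_smul_dotProduct_self_add_eq_one {ι : Type*} [Fintype ι]
    {f g : X → ι → ℝ} (hf : Continuous f) (hg : Continuous g) (hfg : ∀ x, f x ≠ 0 ∨ g x ≠ 0) :
    ∃ c : X → ℝ, Continuous c ∧
      ∀ x, (c x • f x) ⬝ᵥ (c x • f x) + (c x • g x) ⬝ᵥ (c x • g x) = 1 := by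
  have hpos (x : X) : 0 < f x ⬝ᵥ f x + g x ⬝ᵥ g x := by
    obtain hfx | hgx := hfg x
    · exact add_pos_of_pos_of_nonneg (Matrix.dotProduct_self_star_pos_iff.2 hfx)
        (dotProduct_self_star_nonneg (g x))
    · exact add_pos_of_nonneg_of_pos (dotProduct_self_star_nonneg (f x))
        (Matrix.dotProduct_self_star_pos_iff.2 hgx)
  refine ⟨fun x => (√(f x ⬝ᵥ f x + g x ⬝ᵥ g x))⁻¹, ?_, fun x => ?_⟩
  · exact ((hf.dotProduct hf).add (hg.dotProduct hg)).sqrt.inv₀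
      fun x => (Real.sqrt_pos.2 (hpos x)).ne'
  · simp only [smul_dotProduct, dotProduct_smul, smul_eq_mul, ← mul_add, ← mul_assoc, ← sq]
    rw [inv_pow, Real.sq_sqrt (hpos x).le, inv_mul_cancel₀ (hpos x).ne']

theorem exists_continuous_pair_dotProduct_eq_zero {n : X → Fin 3 → ℝ} (hn : Continuous n)
    (hn0 : ∀ x, n x ≠ 0) :
    ∃ v w : X → Fin 3 → ℝ, Continuous v ∧ Continuous w ∧
      (∀ x, n x ⬝ᵥ v x = 0) ∧ (∀ x, n x ⬝ᵥ w x = 0) ∧ ∀ x, v x ⬝ᵥ v x + w x ⬝ᵥ w x = 1 := by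
  let p : Fin 3 → ℝ := Pi.single 0 1
  let q : Fin 3 → ℝ := Pi.single 1 1
  have hcross (y : Fin 3 → ℝ) : Continuous fun x => n x ⨯₃ y :=
    (crossProduct.flip y).continuous_of_finiteDimensional.comp hn
  have hpq : LinearIndependent ℝ ![p, q] := LinearIndependent.pair_iff.2 fun s t h =>
    ⟨by simpa [p, q] using congrFun h 0, by simpa [p, q] using congrFun h 1⟩
  obtain ⟨c, hc, hunit⟩ := exists_continuous_smul_dotProduct_self_add_eq_one (hcross p) (hcross q)
    fun x => cross_ne_zero_or_cross_ne_zero (hn0 x) hpq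
  refine ⟨fun x => c x • (n x ⨯₃ p), fun x => c x • (n x ⨯₃ q),
    hc.smul (hcross p), hc.smul (hcross q), fun x => ?_, fun x => ?_, hunit⟩ <;>
  rw [dotProduct_smul, dot_self_cross, smul_zero]

end CrossProduct

/-- There are continuous odd self-adjoint maps
`a₀, a₁ : S² → M₂(ℂ)` with `a₀(x)² + a₁(x)² = 1` everywhere; hence the `ℤ/2`-action on
`C(S², M₂(ℂ))` by pointwise conjugation by `u_x` has (plain, hence weak)
local-triviality dimension at most `1`. -/
theorem stmt9 :
    ∃ a₀ a₁ : ↥sphere2 → Matrix (Fin 2) (Fin 2) ℂ,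
      Continuous a₀ ∧ Continuous a₁ ∧
      (∀ x, IsSelfAdjoint (a₀ x)) ∧ (∀ x, IsSelfAdjoint (a₁ x)) ∧
      (∀ x : ↥sphere2, uMat x.1 * a₀ x * uMat x.1 = -(a₀ x)) ∧
      (∀ x : ↥sphere2, uMat x.1 * a₁ x * uMat x.1 = -(a₁ x)) ∧
      (∀ x, a₀ x ^ 2 + a₁ x ^ 2 = 1) := by
  have hsphere (x : sphere2) : x.1 ⬝ᵥ x.1 = 1 := mem_sphere2_iff_dotProduct_self.1 x.2
  have hne (x : sphere2) : x.1 ≠ 0 := fun h => by simpa [h] using hsphere x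
  obtain ⟨v, w, hv, hw, hxv, hxw, hunit⟩ :=
    exists_continuous_pair_dotProduct_eq_zero continuous_subtype_val hne
  refine ⟨fun x => uMat (v x), fun x => uMat (w x), continuous_uMat.comp hv,
    continuous_uMat.comp hw, fun x => isSelfAdjoint_uMat _, fun x => isSelfAdjoint_uMat _,
    fun x => ?_, fun x => ?_, fun x => ?_⟩
  · simp [uMat_mul_uMat_mul_uMat, hsphere x, hxv x]
  · simp [uMat_mul_uMat_mul_uMat, hsphere x, hxw x]
  · rw [sq, sq, uMat_mul_self, uMat_mul_self, ← add_smul, hunit, one_smul]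
end

section
/- Let A be a unital C*-algebra and α a *-automorphism of A with α^k = id whose fixed-point algebra {a ∈ A : α(a) = a} equals ℂ·1 (i.e., the ℤ/k-action is ergodic). If there exist normal elements a₀,…,a_n ∈ A with α(a_i) = ζ a_i, σ(a_i) ⊆ ✲_k, and Σ_i a_i a_i* invertible (i.e., wdim(A, ℤ/k) < ∞), then there exists a unitary w ∈ A with α(w) = ζ w and w^k = 1 (equivalently, all three local-triviality dimensions of the action vanish). -/
/-!
By ergodicity, a product of eigenvectors with mutually inverse eigenvalues is a scalar. For a
nonzero eigenvector `b` with eigenvalue `ζ`, this applies to `b* b` and `b b*`, which both equal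
`‖b‖² · 1` by positivity and the C*-identity, so `u = ‖b‖⁻¹ b` is unitary. It also applies to the
`k`-fold product `u ^ k`, which is thus a scalar of modulus one; dividing `u` by a `k`-th root of
this scalar gives `w`.
-/

theorem mem_unitary_of_norm_eq_one {𝕜 : Type*} [RCLike 𝕜] {z : 𝕜} (hz : ‖z‖ = 1) :
    z ∈ unitary 𝕜 := by
  rw [Unitary.mem_iff_star_mul_self, RCLike.star_def, RCLike.conj_mul, hz, RCLike.ofReal_one,
    one_pow]

theorem exists_smul_pow_eq_one_of_mem_unitary {A : Type*} [NormedRing A] [StarRing A]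
    [CStarRing A] [NormedAlgebra ℂ A] {u : A} (hu : u ∈ unitary A) {k : ℕ} (hk : k ≠ 0) {c : ℂ}
    (huk : u ^ k = c • (1 : A)) : ∃ μ ∈ unitary ℂ, (μ • u) ^ k = 1 := by
  rcases subsingleton_or_nontrivial A with _ | _
  · exact ⟨1, one_mem _, Subsingleton.elim _ _⟩
  have norm_c : ‖c‖ = 1 := by
    rw [← CStarRing.norm_of_mem_unitary (pow_mem hu k), huk, norm_smul, norm_one, mul_one]
  obtain ⟨μ, hμ⟩ := IsAlgClosed.exists_pow_nat_eq c⁻¹ (Nat.pos_of_ne_zero hk)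
  have norm_μ : ‖μ‖ = 1 := by
    rw [← pow_eq_one_iff_of_nonneg (norm_nonneg μ) hk, ← norm_pow, hμ, norm_inv, norm_c, inv_one]
  have hc : c ≠ 0 := norm_ne_zero_iff.1 (norm_c ▸ one_ne_zero)
  refine ⟨μ, mem_unitary_of_norm_eq_one norm_μ, ?_⟩
  rw [smul_pow, hμ, huk, smul_smul, inv_mul_cancel₀ hc, one_smul]

section Ergodic

variable {R A : Type*} [CommSemiring R] [Semiring A] [Algebra R A] [Star A]

/-- A unital `*`-endomorphism is ergodic if the scalars are its only fixed points. An action of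
`ℤ/k` is ergodic exactly when the automorphism by which its generator acts is. -/
def IsErgodic (α : A →⋆ₐ[R] A) : Prop :=
  ∀ a : A, α a = a → ∃ c : R, a = c • (1 : A)

namespace IsErgodic

variable {α : A →⋆ₐ[R] A} {ζ : R}

theorem exists_mul_eq_smul_one (hα : IsErgodic α) {ξ : R} (hζξ : ζ * ξ = 1) {x y : A}
    (hx : α x = ζ • x) (hy : α y = ξ • y) : ∃ c : R, x * y = c • (1 : A) :=
  hα _ (by rw [map_mul, hx, hy, smul_mul_smul_comm, hζξ, one_smul])

theorem exists_pow_eq_smul_one (hα : IsErgodic α) {k : ℕ} (hζ : ζ ^ k = 1) {x : A}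
    (hx : α x = ζ • x) : ∃ c : R, x ^ k = c • (1 : A) :=
  hα _ (by rw [map_pow, hx, smul_pow, hζ, one_smul])

end IsErgodic

end Ergodic

section CStarAlgebra

variable {A : Type*} [CStarAlgebra A]

theorem star_mul_self_eq_norm_sq_smul_one {b : A} {c : ℂ} (h : star b * b = c • (1 : A)) :
    star b * b = (‖b‖ ^ 2 : ℂ) • (1 : A) := by
  nontriviality A
  let : PartialOrder A := CStarAlgebra.spectralOrder A
  have : StarOrderedRing A := CStarAlgebra.spectralOrderedRing A
  have c_mem_spectrum : c ∈ spectrum ℂ (star b * b) := by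
    rw [h, ← Algebra.algebraMap_eq_smul_one, spectrum.scalar_eq, Set.mem_singleton_iff]
  open ComplexOrder in
  have c_eq_norm : c = ‖c‖ :=
    Complex.eq_coe_norm_of_nonneg
      (spectrum_nonneg_of_nonneg (star_mul_self_nonneg b) c_mem_spectrum)
  have norm_c : ‖c‖ = ‖b‖ ^ 2 := by
    rw [sq, ← CStarRing.norm_star_mul_self, h, norm_smul, norm_one, mul_one]
  rw [h, c_eq_norm, norm_c, Complex.ofReal_pow]

theorem inv_norm_smul_mem_unitary_of_mul_eq_smul_one {b : A} (hb : b ≠ 0)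
    {c d : ℂ} (hc : star b * b = c • (1 : A)) (hd : b * star b = d • (1 : A)) :
    (‖b‖⁻¹ : ℂ) • b ∈ unitary A := by
  have hmul_star : b * star b = (‖b‖ ^ 2 : ℂ) • (1 : A) := by
    simpa only [star_star, norm_star] using
      star_mul_self_eq_norm_sq_smul_one (b := star b) (by rwa [star_star])
  have hscale : star (‖b‖⁻¹ : ℂ) * (‖b‖⁻¹ : ℂ) * (‖b‖ ^ 2 : ℂ) = 1 := by
    have : (‖b‖ : ℂ) ≠ 0 := by simpa using hb
    simp only [star_inv₀, Complex.star_def, Complex.conj_ofReal]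
    field_simp
  refine Unitary.mem_iff.2 ⟨?_, ?_⟩
  · rw [star_smul, smul_mul_smul_comm, star_mul_self_eq_norm_sq_smul_one hc, smul_smul, hscale,
      one_smul]
  · rw [star_smul, smul_mul_smul_comm, hmul_star, smul_smul, mul_comm (‖b‖⁻¹ : ℂ), hscale,
      one_smul]

theorem IsErgodic.inv_norm_smul_mem_unitary {α : A →⋆ₐ[ℂ] A} (hα : IsErgodic α) {ζ : ℂ}
    (hζ : ζ ∈ unitary ℂ) {b : A} (hb : b ≠ 0) (heig : α b = ζ • b) :
    (‖b‖⁻¹ : ℂ) • b ∈ unitary A := by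
  have heig_star : α (star b) = star ζ • star b := by rw [map_star, heig, star_smul]
  obtain ⟨c, hc⟩ := hα.exists_mul_eq_smul_one (Unitary.star_mul_self_of_mem hζ) heig_star heig
  obtain ⟨d, hd⟩ := hα.exists_mul_eq_smul_one (Unitary.mul_star_self_of_mem hζ) heig heig_star
  exact inv_norm_smul_mem_unitary_of_mul_eq_smul_one hb hc hd

theorem stmt12_general {k : ℕ} (hk : k ≠ 0) {α : A →⋆ₐ[ℂ] A} (hα : IsErgodic α) {ζ : ℂ}
    (hζ : ζ ^ k = 1) {b : A} (hb : b ≠ 0) (heig : α b = ζ • b) :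
    ∃ w : A, w ∈ unitary A ∧ α w = ζ • w ∧ w ^ k = 1 := by
  have eigenvector_smul (μ : ℂ) {x : A} (hx : α x = ζ • x) : α (μ • x) = ζ • μ • x := by
    rw [map_smul, hx, smul_comm]
  have hζ_unitary : ζ ∈ unitary ℂ :=
    mem_unitary_of_norm_eq_one (Complex.norm_eq_one_of_pow_eq_one hζ hk)
  have hu := hα.inv_norm_smul_mem_unitary hζ_unitary hb heig
  have hu_eig := eigenvector_smul (‖b‖⁻¹ : ℂ) heig
  obtain ⟨c, huk⟩ := hα.exists_pow_eq_smul_one hζ hu_eig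
  obtain ⟨μ, hμ, hwk⟩ := exists_smul_pow_eq_one_of_mem_unitary hu hk huk
  exact ⟨_, Unitary.smul_mem_of_mem hμ hu, eigenvector_smul μ hu_eig, hwk⟩

end CStarAlgebra

theorem ltZeta_pow_self {k : ℕ} (hk : k ≠ 0) : ltZeta k ^ k = 1 :=
  (Complex.isPrimitiveRoot_exp k hk).pow_eq_one

/-- Let `α` be an ergodic `ℤ/k`-action on a unital C*-algebra `A`
(the fixed-point algebra is `ℂ·1`).  If the weak local-triviality dimension is finite —
i.e. there are normal `a₀, …, a_n` in the `ζ`-eigenspace with spectra in `✲_k` and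
`Σᵢ aᵢ aᵢ*` invertible — then there is a unitary `w ∈ A` with `α(w) = ζ·w` and
`w^k = 1` (so all three local-triviality dimensions vanish). -/
theorem stmt12
    {A : Type*} [NormedRing A] [StarRing A] [CStarRing A] [NormedAlgebra ℂ A]
    [CompleteSpace A] [StarModule ℂ A]
    (k : ℕ) (hk : 1 ≤ k)
    (α : A ≃⋆ₐ[ℂ] A) (hαk : (⇑α)^[k] = id)
    (herg : ∀ a : A, α a = a → ∃ c : ℂ, a = c • (1 : A))
    (n : ℕ) (a : Fin (n + 1) → A)
    (hnormal : ∀ i, IsStarNormal (a i))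
    (heig : ∀ i, α (a i) = ltZeta k • a i)
    (hspec : ∀ i, spectrum ℂ (a i) ⊆ ltAsterisk k)
    (hinv : IsUnit (∑ i, a i * star (a i))) :
    ∃ w : A, w ∈ unitary A ∧ α w = ltZeta k • w ∧ w ^ k = 1 := by
  let : CStarAlgebra A := {}
  have hk' : k ≠ 0 := Nat.one_le_iff_ne_zero.1 hk
  rcases subsingleton_or_nontrivial A with _ | _
  · exact ⟨1, one_mem _, Subsingleton.elim _ _, Subsingleton.elim _ _⟩
  obtain ⟨i, hi⟩ : ∃ i, a i ≠ 0 := by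
    by_contra! h
    simp [h] at hinv
  exact stmt12_general (α := (α : A →⋆ₐ[ℂ] A)) hk' herg (ltZeta_pow_self hk') hi (heig i)
end
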